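/- arXiv:2103.02321 — 3 statements merged into one kernel-verified Lean document; each statement's English description precedes it below -/
import Mathlib

section
/- Let u be a linear functional on ℂ[x] with u_0 ≠ 0, let P be a polynomial, let c ∈ ℂ, and let Q be the polynomial obtained by applying u to the second variable of the divided difference of P, i.e. Q(x) = (1/u_0)·⟨u_y, (P(x) − P(y))/(x − y)⟩. Then Q′(c) = (1/u_0)·⟨u, q⟩, where q is the unique polynomial with P(x) = P(c) + P′(c)(x−c) + (x−c)²·q(x); in other words Q′(c) = (1/u_0)·⟨(x−c)^{-2}u, P⟩. In particular, if (P_n) is the SMOP of u and P^{(1)}_{n−1}(x) = (1/u_0)⟨u_y, (P_n(x) − P_n(y))/(x − y)⟩ is the (n−1)-st associated polynomial of the first kind, then (P^{(1)}_{n−1})′(c) = (1/u_0)·⟨(x−c)^{-2}u, P_n⟩ for all n ≥ 1. -/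
open Polynomial

noncomputable section

/-- Apply a linear functional (identified with its moment sequence) to a polynomial:
`⟨u, p⟩ = Σ_k c_k u_k` for `p = Σ_k c_k x^k`. -/
def fapply (u : ℕ → ℂ) (p : Polynomial ℂ) : ℂ := p.sum fun k ck => ck * u k

/-- `P` is the sequence of monic orthogonal polynomials (SMOP) of the functional `u`. -/
def IsSMOP (u : ℕ → ℂ) (P : ℕ → Polynomial ℂ) : Prop :=
  (∀ n, (P n).Monic) ∧ (∀ n, (P n).natDegree = n) ∧
    (∀ n m, n ≠ m → fapply u (P n * P m) = 0) ∧ (∀ n, fapply u (P n * P n) ≠ 0)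

/-- A functional is quasi-definite iff it admits a SMOP. -/
def IsQuasiDefinite (u : ℕ → ℂ) : Prop := ∃ P, IsSMOP u P

/-- Three term recurrence relation `x P_n = P_{n+1} + b_n P_n + a_n P_{n-1}`,
with `P_{-1} = 0`, `P_0 = 1`. -/
def HasTTRR (P : ℕ → Polynomial ℂ) (a b : ℕ → ℂ) : Prop :=
  P 0 = 1 ∧ X * P 0 = P 1 + C (b 0) * P 0 ∧
    ∀ n, 1 ≤ n → X * P n = P (n + 1) + C (b n) * P n + C (a n) * P (n - 1)

/-- Wronskian `W(p,q)(x) = p(x) q'(x) - p'(x) q(x)`. -/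
def Wr (p q : Polynomial ℂ) (x : ℂ) : ℂ :=
  p.eval x * (derivative q).eval x - (derivative p).eval x * q.eval x

/-- The monic Jacobi matrix with diagonal `b`, superdiagonal `1` and subdiagonal
entries `J_{n+1,n} = a_{n+1}`. -/
def jacobi (a b : ℕ → ℂ) (i j : ℕ) : ℂ :=
  if i = j then b i else if j = i + 1 then 1 else if i = j + 1 then a i else 0

/-- Entrywise product of semi-infinite (banded) matrices; the sum has finite support. -/
def mprod (A B : ℕ → ℕ → ℂ) (i j : ℕ) : ℂ := ∑' k, A i k * B k j

/-- `w` is the moment sequence of the inverse functional `u⁻¹`: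
the convolution of the moments of `u` and `w` is `(1,0,0,…)`. -/
def IsInverseMoments (u w : ℕ → ℂ) : Prop :=
  ∀ n, ∑ k ∈ Finset.range (n + 1), u k * w (n - k) = if n = 0 then 1 else 0

/-- Apply a functional `u` to the second (outer) variable `y` of a bivariate polynomial
`D = Σ_k q_k(x) y^k`, giving `Σ_k u_k q_k(x)`. -/
def fapplyY (u : ℕ → ℂ) (D : Polynomial (Polynomial ℂ)) : Polynomial ℂ :=
  D.sum fun k q => u k • q

/-!
Write `∂ₓD` for the derivative of the divided difference `D(x, y)` in `x`. Differentiating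
`(x - y) D(x, y) = p(x) - p(y)` in `x` and putting `x = c` gives
`D(c, y) + (c - y) ∂ₓD(c, y) = p'(c)`, while `(c - y) D(c, y) = p(c) - p(y)`; eliminating `D(c, y)`
yields `(y - c)² ∂ₓD(c, y) = p(y) - p(c) - p'(c) (y - c)`, so that `∂ₓD(c, y) = q(y)`. As `u` acts
on `y` only, it commutes with differentiation in `x` and with evaluation at `x = c`.
-/

section MomentMap

variable {R A : Type*} [CommSemiring R] [Semiring A] [Module R A]

/-- The linear functional with moments `u`, extended to polynomials with coefficients in `A`:
it sends `∑ aₖ yᵏ` to `∑ uₖ aₖ`. For `A = R` this is the functional itself, for `A = R[X]` it is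
the functional acting on the outer variable of a bivariate polynomial. -/
def momentMap (u : ℕ → R) : A[X] →ₗ[R] A :=
  lsum fun k => u k • LinearMap.id

@[simp]
lemma momentMap_monomial (u : ℕ → R) (k : ℕ) (a : A) :
    momentMap u (monomial k a) = u k • a := by
  simp [momentMap, lsum]

lemma eval_derivative_momentMap (u : ℕ → R) (c : R) (D : R[X][X]) :
    (derivative (momentMap u D)).eval c =
      momentMap u ((derivative (Bivariate.swap D)).eval (C c)) := by
  induction D using Polynomial.induction_on' with
  | add D E hD hE => simp only [map_add, eval_add, hD, hE]
  | monomial k a =>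
    induction a using Polynomial.induction_on' with
    | add a b ha hb => simp only [map_add, eval_add, ha, hb]
    | monomial j r =>
      have eval_partial : (derivative (Bivariate.swap (monomial k (monomial j r)))).eval (C c) =
          monomial k (r * j * c ^ (j - 1)) := by
        rw [Bivariate.swap_monomial_monomial, derivative_monomial, eval_monomial, ← C_pow,
          ← C_eq_natCast, monomial_mul_C, monomial_mul_C]
      rw [eval_partial, momentMap_monomial, momentMap_monomial, derivative_smul, eval_smul,
        derivative_monomial, eval_monomial]

end MomentMap

section DividedDifference

variable {R : Type*} [CommRing R] {p q : R[X]} {D : R[X][X]}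

/-- `D` is the divided difference `(p(x) - p(y)) / (x - y)`, characterized by clearing the
denominator. The outer variable of `D` is `y`, so that `x` is `C X` and `y` is `X`; consequently
differentiation in `x` is `derivative` only after `Bivariate.swap`. -/
def IsDividedDifference (p : R[X]) (D : R[X][X]) : Prop :=
  (C X - X) * D = C p - p.map C

namespace IsDividedDifference

lemma swap (hD : IsDividedDifference p D) :
    (X - C X) * Bivariate.swap D = p.map C - C p := by
  have swapped := congrArg Bivariate.swap hD
  rwa [map_mul, map_sub, map_sub, Bivariate.swap_X, Bivariate.swap_Y, Bivariate.swap_C,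
    Bivariate.swap_map_C] at swapped

lemma sq_mul_eval_derivative_swap (hD : IsDividedDifference p D) (c : R) :
    (X - C c) ^ 2 * (derivative (Bivariate.swap D)).eval (C c) =
      p - C (p.eval c) - C ((derivative p).eval c) * (X - C c) := by
  have value_at_c : (C c - X) * (Bivariate.swap D).eval (C c) = C (p.eval c) - p := by
    simpa using congrArg (eval (C c)) hD.swap
  have derivative_at_c : (Bivariate.swap D).eval (C c) +
      (C c - X) * (derivative (Bivariate.swap D)).eval (C c) = C ((derivative p).eval c) := by
    simpa [derivative_map] using congrArg (fun F => (derivative F).eval (C c)) hD.swap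
  linear_combination (C c - X) * derivative_at_c - value_at_c

lemma eval_derivative_swap {c : R} (hD : IsDividedDifference p D)
    (hq : p = C (p.eval c) + C ((derivative p).eval c) * (X - C c) + (X - C c) ^ 2 * q) :
    (derivative (Bivariate.swap D)).eval (C c) = q := by
  have sq_mul_eq : (X - C c) ^ 2 * (derivative (Bivariate.swap D)).eval (C c) =
      (X - C c) ^ 2 * q := by
    linear_combination hD.sq_mul_eval_derivative_swap c + hq
  exact ((monic_X_sub_C c).pow 2).isRegular.left sq_mul_eq

end IsDividedDifference

theorem stmt_1_general (u : ℕ → R) {c : R} (hD : (C X - X) * D = C p - p.map C)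
    (hq : p = C (p.eval c) + C ((derivative p).eval c) * (X - C c) + (X - C c) ^ 2 * q) :
    (derivative (momentMap u D)).eval c = momentMap u q := by
  rw [eval_derivative_momentMap, IsDividedDifference.eval_derivative_swap hD hq]

end DividedDifference

lemma fapply_eq_momentMap (u : ℕ → ℂ) (p : ℂ[X]) : fapply u p = momentMap u p := by
  simp [fapply, momentMap, lsum, mul_comm]

lemma fapplyY_eq_momentMap (u : ℕ → ℂ) (D : ℂ[X][X]) : fapplyY u D = momentMap u D :=
  rfl

/-- for a functional `u` with `u_0 ≠ 0`, if
`Q(x) = (1/u_0)⟨u_y, (P(x)-P(y))/(x-y)⟩` then `Q'(c) = (1/u_0)⟨(x-c)⁻²u, P⟩`; in particular,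
for the first-kind associated polynomials of the SMOP of `u`,
`(P^{(1)}_{n-1})'(c) = (1/u_0)⟨(x-c)⁻²u, P_n⟩` for all `n ≥ 1`.
Here the divided difference `(P(x)-P(y))/(x-y)` is encoded as the (unique) bivariate
polynomial `D` (in the outer variable `y`, with coefficients in `ℂ[x]`) satisfying
`(x - y) D = P(x) - P(y)`, and `(x-c)⁻²u` applied to `P` is `⟨u, q⟩` where `q` is the
unique polynomial with `P = P(c) + P'(c)(x-c) + (x-c)² q`. -/
theorem stmt_1 (u : ℕ → ℂ) (hu0 : u 0 ≠ 0) (c : ℂ)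
    (P : ℕ → Polynomial ℂ) (hP : IsSMOP u P)
    (D : ℕ → Polynomial (Polynomial ℂ))
    (hD : ∀ n, 1 ≤ n →
      (Polynomial.C Polynomial.X - Polynomial.X) * D n
        = Polynomial.C (P n) - (P n).map Polynomial.C)
    (q : ℕ → Polynomial ℂ)
    (hq : ∀ n, 1 ≤ n →
      P n = C ((P n).eval c) + C ((derivative (P n)).eval c) * (X - C c)
        + (X - C c) ^ 2 * q n) :
    (∀ (p : Polynomial ℂ) (Dp : Polynomial (Polynomial ℂ)) (qp : Polynomial ℂ),
        (Polynomial.C Polynomial.X - Polynomial.X) * Dp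
            = Polynomial.C p - p.map Polynomial.C →
        p = C (p.eval c) + C ((derivative p).eval c) * (X - C c) + (X - C c) ^ 2 * qp →
        (derivative ((u 0)⁻¹ • fapplyY u Dp)).eval c = (u 0)⁻¹ * fapply u qp)
    ∧ (∀ n, 1 ≤ n →
        (derivative ((u 0)⁻¹ • fapplyY u (D n))).eval c = (u 0)⁻¹ * fapply u (q n)) := by
  simp only [derivative_smul, eval_smul, smul_eq_mul, fapply_eq_momentMap, fapplyY_eq_momentMap]
  exact ⟨fun _ _ _ hDp hqp => congrArg _ (stmt_1_general u hDp hqp),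
    fun n hn => congrArg _ (stmt_1_general u (hD n hn) (hq n hn))⟩
end
end

section
/- Let u be a quasi-definite linear functional on ℂ[x] with SMOP (P_n)_{n≥0} and associated polynomials of the first kind (P^{(1)}_n)_{n≥0}, let c ∈ ℂ, and let û be a linear functional with u = (x−c)²û (so the moments û_0, û_1 are free parameters). Set S_n(x) = (û_1 − c·û_0)·P_n(x) + u_0·P^{(1)}_{n−1}(x) and, for n ≥ 2, d_n* = S_{n−2}(c)·(S′_{n−1}(c) + û_0·P_{n−1}(c)) − S_{n−1}(c)·(S′_{n−2}(c) + û_0·P_{n−2}(c)). Then û is quasi-definite if and only if û_0 ≠ 0 and d_n* ≠ 0 for all n ≥ 2; moreover, in that case the SMOP (Q_n)_{n≥0} of û is given by Q_0 = 1, Q_1(x) = x − û_1/û_0, and for n ≥ 2, Q_n(x) = (1/d_n*)·det of the 3×3 matrix with first row (P_n(x), P_{n−1}(x), P_{n−2}(x)), second row (S′_n(c)+û_0 P_n(c), S′_{n−1}(c)+û_0 P_{n−1}(c), S′_{n−2}(c)+û_0 P_{n−2}(c)), and third row (S_n(c), S_{n−1}(c), S_{n−2}(c)). -/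
open Polynomial

noncomputable section

/-- `S_n(x) = (û_1 - c û_0) P_n(x) + u_0 P^{(1)}_{n-1}(x)` (with `P^{(1)}_{-1} = 0`). -/
def Spoly (u uh : ℕ → ℂ) (c : ℂ) (P P1 : ℕ → Polynomial ℂ) (n : ℕ) : Polynomial ℂ :=
  C (uh 1 - c * uh 0) * P n + C (u 0) * (if n = 0 then 0 else P1 (n - 1))

/-- The entries `S'_n(c) + û_0 P_n(c)` of the second row. -/
def row2 (u uh : ℕ → ℂ) (c : ℂ) (P P1 : ℕ → Polynomial ℂ) (n : ℕ) : ℂ :=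
  (derivative (Spoly u uh c P P1 n)).eval c + uh 0 * (P n).eval c

/-- `d_n* = S_{n-2}(c)(S'_{n-1}(c)+û_0 P_{n-1}(c)) - S_{n-1}(c)(S'_{n-2}(c)+û_0 P_{n-2}(c))`. -/
def dstar (u uh : ℕ → ℂ) (c : ℂ) (P P1 : ℕ → Polynomial ℂ) (n : ℕ) : ℂ :=
  (Spoly u uh c P P1 (n - 2)).eval c * row2 u uh c P P1 (n - 1)
    - (Spoly u uh c P P1 (n - 1)).eval c * row2 u uh c P P1 (n - 2)

/-! Over a field, a functional `M` is quasi-definite if and only if, for every `n`, no nonzero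
polynomial of degree less than `n` is `M`-orthogonal to all polynomials of degree less than `n`.

Let `L = (X - c)² M` have monic orthogonal polynomials `P`. Dividing twice by `X - c`, a polynomial
is `M`-orthogonal to degrees less than `n + 2` if and only if it is `L`-orthogonal to degrees less
than `n` and is annihilated by `M` and by `M ∘ (X - c)`. If it has degree less than `n + 2`, the
first condition makes it a combination of `Pₙ₊₁` and `Pₙ`, and the other two form a homogeneous
`2 × 2` linear system for its coefficients. The same conditions on a combination of `Pₙ₊₂`, `Pₙ₊₁`,
`Pₙ` give the determinantal formula for the orthogonal polynomials of `M`.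

The recurrence shows that `Sₙ(c) = M ((X - c) Pₙ)` and `S′ₙ(c) + û₀ Pₙ(c) = M (Pₙ)`, so that the
determinant of the system is `d*ₙ₊₂`. -/

section MonicOrthogonal

section CommSemiring

variable {K : Type*} [CommSemiring K]

/-- The submodule of polynomials orthogonal, for the bilinear form `(p, q) ↦ L (p * q)`, to all
polynomials of degree less than `n`. -/
def orthogonalBelow (L : K[X] →ₗ[K] K) (n : ℕ) : Submodule K K[X] :=
  LinearMap.BilinForm.orthogonal ((LinearMap.mul K K[X]).compr₂ L) (degreeLT K n)

/-- `P` is a sequence of monic polynomials with `deg P n = n`, orthogonal with respect to the linear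
functional `L`: the counterpart of `IsSMOP` for functionals over an arbitrary coefficient ring. -/
structure IsMonicOrthogonal (L : K[X] →ₗ[K] K) (P : ℕ → K[X]) : Prop where
  monic (n : ℕ) : (P n).Monic
  natDegree_eq (n : ℕ) : (P n).natDegree = n
  apply_mul_eq_zero (n m : ℕ) : n ≠ m → L (P n * P m) = 0
  apply_mul_self_ne_zero (n : ℕ) : L (P n * P n) ≠ 0

variable {L : K[X] →ₗ[K] K} {P : ℕ → K[X]} {p T : K[X]} {n : ℕ}

lemma mem_orthogonalBelow : T ∈ orthogonalBelow L n ↔ ∀ p ∈ degreeLT K n, L (p * T) = 0 :=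
  Iff.rfl

lemma orthogonalBelow_anti (L : K[X] →ₗ[K] K) : Antitone (orthogonalBelow L) :=
  fun _ _ h ↦ LinearMap.BilinForm.orthogonal_le (degreeLT_mono h)

lemma apply_C_mul (L : K[X] →ₗ[K] K) (x : K) (p : K[X]) : L (C x * p) = x * L p := by
  rw [← smul_eq_C_mul, map_smul, smul_eq_mul]

lemma C_mul_mem_orthogonalBelow (hT : T ∈ orthogonalBelow L n) (x : K) :
    C x * T ∈ orthogonalBelow L n := by
  rw [← smul_eq_C_mul]
  exact Submodule.smul_mem _ _ hT

lemma C_mul_mem_degreeLT (hp : p ∈ degreeLT K n) (x : K) : C x * p ∈ degreeLT K n := by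
  rw [← smul_eq_C_mul]
  exact Submodule.smul_mem _ _ hp

lemma mem_degreeLT_of_natDegree_lt (h : p.natDegree < n) : p ∈ degreeLT K n :=
  mem_degreeLT.2 (degree_le_natDegree.trans_lt (mod_cast h))

lemma one_mem_degreeLT_succ (n : ℕ) : (1 : K[X]) ∈ degreeLT K (n + 1) :=
  mem_degreeLT_of_natDegree_lt (by simp)

lemma disjoint_degreeLT_zero (L : K[X] →ₗ[K] K) :
    Disjoint (degreeLT K 0) (orthogonalBelow L 0) :=
  Submodule.disjoint_def.2 fun T hT _ ↦ by simpa [mem_degreeLT] using hT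

namespace IsMonicOrthogonal

lemma zero_eq_one (hP : IsMonicOrthogonal L P) : P 0 = 1 :=
  (hP.monic 0).natDegree_eq_zero.1 (hP.natDegree_eq 0)

lemma apply_one_ne_zero (hP : IsMonicOrthogonal L P) : L 1 ≠ 0 := by
  simpa [hP.zero_eq_one] using hP.apply_mul_self_ne_zero 0

lemma coeff_self (hP : IsMonicOrthogonal L P) (n : ℕ) : (P n).coeff n = 1 := by
  simpa [hP.natDegree_eq] using (hP.monic n).coeff_natDegree

lemma coeff_eq_zero (hP : IsMonicOrthogonal L P) {m : ℕ} (h : n < m) : (P n).coeff m = 0 :=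
  coeff_eq_zero_of_natDegree_lt ((hP.natDegree_eq n).trans_lt h)

lemma mem_degreeLT_of_lt (hP : IsMonicOrthogonal L P) {m : ℕ} (h : n < m) : P n ∈ degreeLT K m :=
  mem_degreeLT_of_natDegree_lt ((hP.natDegree_eq n).trans_lt h)

lemma apply_succ_eq_zero (hP : IsMonicOrthogonal L P) (n : ℕ) : L (P (n + 1)) = 0 := by
  simpa [hP.zero_eq_one] using hP.apply_mul_eq_zero (n + 1) 0 (by simp)

lemma C_mul_add_C_mul_mem_degreeLT (hP : IsMonicOrthogonal L P) (n : ℕ) (x y : K) :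
    C x * P (n + 1) + C y * P n ∈ degreeLT K (n + 2) :=
  add_mem (C_mul_mem_degreeLT (hP.mem_degreeLT_of_lt (by lia)) x)
    (C_mul_mem_degreeLT (hP.mem_degreeLT_of_lt (by lia)) y)

end IsMonicOrthogonal

lemma isMonicOrthogonal_of_mem_orthogonalBelow (hm : ∀ n, (P n).Monic)
    (hd : ∀ n, (P n).natDegree = n) (ho : ∀ n, P n ∈ orthogonalBelow L n)
    (hne : ∀ n, L (P n * P n) ≠ 0) : IsMonicOrthogonal L P where
  monic := hm
  natDegree_eq := hd
  apply_mul_eq_zero n m hnm := by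
    have hlt {i j : ℕ} (h : i < j) : L (P i * P j) = 0 :=
      mem_orthogonalBelow.1 (ho j) _ (mem_degreeLT_of_natDegree_lt ((hd i).trans_lt h))
    rcases hnm.lt_or_gt with h | h
    · exact hlt h
    · rw [mul_comm, hlt h]
  apply_mul_self_ne_zero := hne

end CommSemiring

section CommRing

variable {K : Type*} [CommRing K] {L : K[X] →ₗ[K] K} {P : ℕ → K[X]} {p q T : K[X]} {n : ℕ}

lemma sub_C_coeff_mul_mem_degreeLT (hq : q.Monic) (hn : q.natDegree = n)
    (hp : p ∈ degreeLT K (n + 1)) : p - C (p.coeff n) * q ∈ degreeLT K n := by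
  rw [mem_degreeLT, degree_lt_iff_coeff_zero] at hp ⊢
  intro m hm
  rcases hm.eq_or_lt with rfl | hm
  · simp [← hn, hq.coeff_natDegree]
  · simp [hp m hm, coeff_eq_zero_of_natDegree_lt (hn.trans_lt hm)]

lemma mem_orthogonalBelow_succ (hq : q.Monic) (hn : q.natDegree = n)
    (hT : T ∈ orthogonalBelow L n) (hqT : L (q * T) = 0) : T ∈ orthogonalBelow L (n + 1) := by
  intro p hp
  have hsplit : p * T = (p - C (p.coeff n) * q) * T + C (p.coeff n) * (q * T) := by ring
  change L (p * T) = 0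
  rw [hsplit, map_add, apply_C_mul, hqT,
    mem_orthogonalBelow.1 hT _ (sub_C_coeff_mul_mem_degreeLT hq hn hp), mul_zero, add_zero]

lemma IsMonicOrthogonal.mem_orthogonalBelow_self (hP : IsMonicOrthogonal L P) (n : ℕ) :
    P n ∈ orthogonalBelow L n := by
  suffices ∀ m ≤ n, P n ∈ orthogonalBelow L m from this n le_rfl
  intro m hm
  induction m with
  | zero => simp [mem_orthogonalBelow, mem_degreeLT]
  | succ m ih =>
    exact mem_orthogonalBelow_succ (hP.monic m) (hP.natDegree_eq m) (ih (by lia))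
      (hP.apply_mul_eq_zero m n (by lia))

lemma IsMonicOrthogonal.disjoint_degreeLT [NoZeroDivisors K] (hP : IsMonicOrthogonal L P) (n : ℕ) :
    Disjoint (degreeLT K n) (orthogonalBelow L n) := by
  rw [Submodule.disjoint_def]
  induction n with
  | zero => exact Submodule.disjoint_def.1 (disjoint_degreeLT_zero L)
  | succ n ih =>
    intro T hT hTo
    have hrem := sub_C_coeff_mul_mem_degreeLT (hP.monic n) (hP.natDegree_eq n) hT
    have hsplit : P n * T = (T - C (T.coeff n) * P n) * P n + C (T.coeff n) * (P n * P n) := by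
      ring
    have hPT : L (P n * T) = 0 :=
      mem_orthogonalBelow.1 hTo _ (hP.mem_degreeLT_of_lt n.lt_succ_self)
    rw [hsplit, map_add, mem_orthogonalBelow.1 (hP.mem_orthogonalBelow_self n) _ hrem,
      apply_C_mul, zero_add] at hPT
    have hcoeff : T.coeff n = 0 :=
      (mul_eq_zero.1 hPT).resolve_right (hP.apply_mul_self_ne_zero n)
    refine ih T ?_ (orthogonalBelow_anti L n.le_succ hTo)
    simpa [hcoeff] using hrem

lemma IsMonicOrthogonal.eq_C_coeff_mul [NoZeroDivisors K] (hP : IsMonicOrthogonal L P)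
    (hT : T ∈ degreeLT K (n + 1)) (hTo : T ∈ orthogonalBelow L n) : T = C (T.coeff n) * P n := by
  rw [← sub_eq_zero]
  exact Submodule.disjoint_def.1 (hP.disjoint_degreeLT n) _
    (sub_C_coeff_mul_mem_degreeLT (hP.monic n) (hP.natDegree_eq n) hT) <|
    sub_mem hTo (C_mul_mem_orthogonalBelow (hP.mem_orthogonalBelow_self n) _)

lemma disjoint_degreeLT_one_iff [IsDomain K] :
    Disjoint (degreeLT K 1) (orthogonalBelow L 1) ↔ L 1 ≠ 0 := by
  have hconst {p : K[X]} (hp : p ∈ degreeLT K 1) : p = C (p.coeff 0) :=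
    eq_C_of_degree_le_zero (Nat.WithBot.lt_one_iff_le_zero.1 (mem_degreeLT.1 hp))
  rw [Submodule.disjoint_def]
  constructor
  · intro h hL
    refine one_ne_zero (h 1 (one_mem_degreeLT_succ 0) fun p hp ↦ ?_)
    change L (p * 1) = 0
    rw [hconst hp, apply_C_mul, hL, mul_zero]
  · intro hL T hT hTo
    have hLT : L (1 * T) = 0 := mem_orthogonalBelow.1 hTo 1 (one_mem_degreeLT_succ 0)
    rw [one_mul, hconst hT, ← mul_one (C _), apply_C_mul] at hLT
    rw [hconst hT, (mul_eq_zero.1 hLT).resolve_right hL, C_0]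

lemma IsMonicOrthogonal.C_mul_add_C_mul_mem_orthogonalBelow (hP : IsMonicOrthogonal L P) (n : ℕ)
    (x y : K) : C x * P (n + 1) + C y * P n ∈ orthogonalBelow L n :=
  add_mem
    (C_mul_mem_orthogonalBelow
      (orthogonalBelow_anti L n.le_succ (hP.mem_orthogonalBelow_self (n + 1))) x)
    (C_mul_mem_orthogonalBelow (hP.mem_orthogonalBelow_self n) y)

lemma IsMonicOrthogonal.exists_eq_C_mul_add_C_mul [NoZeroDivisors K]
    (hP : IsMonicOrthogonal L P) (hT : T ∈ degreeLT K (n + 2)) (hTo : T ∈ orthogonalBelow L n) :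
    ∃ x y, T = C x * P (n + 1) + C y * P n := by
  have hrem := sub_C_coeff_mul_mem_degreeLT (hP.monic (n + 1)) (hP.natDegree_eq (n + 1)) hT
  exact ⟨_, _, sub_eq_iff_eq_add'.1 <| hP.eq_C_coeff_mul hrem <| sub_mem hTo <|
    C_mul_mem_orthogonalBelow
      (orthogonalBelow_anti L n.le_succ (hP.mem_orthogonalBelow_self (n + 1))) _⟩

end CommRing

section Field

variable {K : Type*} [Field K] {L : K[X] →ₗ[K] K} {n : ℕ}

lemma IsMonicOrthogonal.one_eq_X_sub_C {P : ℕ → K[X]} (hP : IsMonicOrthogonal L P) :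
    P 1 = X - C (L X / L 1) := by
  have hlin : P 1 = X + C ((P 1).coeff 0) := by
    simpa [hP.coeff_self] using eq_X_add_C_of_natDegree_le_one (hP.natDegree_eq 1).le
  have hL : L (P 1) = 0 := hP.apply_succ_eq_zero 0
  rw [hlin, map_add, ← mul_one (C _), apply_C_mul] at hL
  have hcoeff : (P 1).coeff 0 = -L X / L 1 :=
    eq_div_of_mul_eq hP.apply_one_ne_zero (by linear_combination hL)
  rw [hlin, hcoeff, neg_div, C_neg, sub_eq_add_neg]

lemma exists_monic_mem_orthogonalBelow (h : Disjoint (degreeLT K n) (orthogonalBelow L n)) :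
    ∃ q : K[X], q.Monic ∧ q.natDegree = n ∧ q ∈ orthogonalBelow L n := by
  set B : LinearMap.BilinForm K K[X] := (LinearMap.mul K K[X]).compr₂ L
  have hB : B.IsRefl := fun p q hpq ↦ (congrArg L (mul_comm q p)).trans hpq
  have hnd : (B.restrict (degreeLT K n)).Nondegenerate :=
    B.nondegenerate_restrict_of_disjoint_orthogonal hB h
  -- `p` is the orthogonal projection of `X ^ n` to the polynomials of smaller degree.
  obtain ⟨p, hp⟩ := ((B.restrict _).toDual hnd).surjective ((B (X ^ n)).domRestrict _)
  have hdeg : (p : K[X]).degree < n := mem_degreeLT.1 p.2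
  refine ⟨X ^ n - p.1, monic_X_pow_sub hdeg, natDegree_eq_of_degree_eq_some ?_, fun q hq ↦ ?_⟩
  · rw [degree_sub_eq_left_of_degree_lt (by rwa [degree_X_pow]), degree_X_pow]
  · have hpq : L (p.1 * q) = L (X ^ n * q) := LinearMap.congr_fun hp ⟨q, hq⟩
    change L (q * (X ^ n - p.1)) = 0
    rw [mul_sub, map_sub, mul_comm q, mul_comm q, hpq, sub_self]

theorem exists_isMonicOrthogonal_iff :
    (∃ P, IsMonicOrthogonal L P) ↔ ∀ n, Disjoint (degreeLT K n) (orthogonalBelow L n) := by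
  refine ⟨fun ⟨P, hP⟩ ↦ hP.disjoint_degreeLT, fun h ↦ ?_⟩
  choose P hm hd ho using fun n ↦ exists_monic_mem_orthogonalBelow (h n)
  refine ⟨P, isMonicOrthogonal_of_mem_orthogonalBelow hm hd ho fun n hn ↦ (hm n).ne_zero ?_⟩
  exact Submodule.disjoint_def.1 (h (n + 1)) _
    (mem_degreeLT_of_natDegree_lt ((hd n).trans_lt n.lt_succ_self))
    (mem_orthogonalBelow_succ (hm n) (hd n) (ho n) hn)

end Field

end MonicOrthogonal

section QuadraticGeronimus

variable {K : Type*} [CommRing K] {L M : K[X] →ₗ[K] K} {c : K} {T : K[X]}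

lemma exists_eq_C_add_X_sub_C_mul {p : K[X]} {n : ℕ} (hp : p ∈ degreeLT K (n + 1)) (c : K) :
    ∃ x, ∃ q ∈ degreeLT K n, p = C x + (X - C c) * q := by
  nontriviality K
  refine ⟨p.eval c, p /ₘ (X - C c), ?_, ?_⟩
  · rcases eq_or_ne p 0 with rfl | hp₀
    · simp
    · have hlt := degree_divByMonic_lt p (X - C c) hp₀ (by simp)
      rw [degreeLT_succ_eq_degreeLE, mem_degreeLE] at hp
      exact mem_degreeLT.2 (hlt.trans_le hp)
  · rw [← modByMonic_X_sub_C_eq_C_eval, modByMonic_add_div]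

lemma X_sub_C_mul_mem_degreeLT {p : K[X]} {n : ℕ} (hp : p ∈ degreeLT K n) (c : K) :
    (X - C c) * p ∈ degreeLT K (n + 1) := by
  rw [mem_degreeLT, degree_lt_iff_coeff_zero] at hp ⊢
  rintro (_ | m) hm
  · lia
  · rw [coeff_X_sub_C_mul, hp m (by lia), hp (m + 1) (by lia), mul_zero, sub_zero]

lemma mem_orthogonalBelow_add_one_iff {N : K[X] →ₗ[K] K}
    (hN : ∀ p, N p = M ((X - C c) * p)) (n : ℕ) :
    T ∈ orthogonalBelow M (n + 1) ↔ M T = 0 ∧ T ∈ orthogonalBelow N n := by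
  simp only [mem_orthogonalBelow]
  constructor
  · intro hT
    refine ⟨by simpa using hT 1 (one_mem_degreeLT_succ n), fun q hq ↦ ?_⟩
    rw [hN, ← mul_assoc]
    exact hT _ (X_sub_C_mul_mem_degreeLT hq c)
  · rintro ⟨hMT, hNT⟩ p hp
    obtain ⟨x, q, hq, rfl⟩ := exists_eq_C_add_X_sub_C_mul hp c
    rw [add_mul, map_add, apply_C_mul, hMT, mul_assoc, ← hN, hNT q hq, mul_zero, add_zero]

lemma mem_orthogonalBelow_add_two_iff (hLM : ∀ p, L p = M ((X - C c) ^ 2 * p)) (n : ℕ) :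
    T ∈ orthogonalBelow M (n + 2) ↔
      M T = 0 ∧ M ((X - C c) * T) = 0 ∧ T ∈ orthogonalBelow L n := by
  let N : K[X] →ₗ[K] K := M ∘ₗ LinearMap.mulLeft K (X - C c)
  have hLN (p : K[X]) : L p = N ((X - C c) * p) := by
    rw [hLM, pow_two, mul_assoc]; rfl
  rw [mem_orthogonalBelow_add_one_iff (N := N) (fun _ ↦ rfl), mem_orthogonalBelow_add_one_iff hLN]
  rfl

variable {P P₁ : ℕ → K[X]} {a b : ℕ → K}

lemma IsMonicOrthogonal.disjoint_degreeLT_add_two_iff [IsDomain K] (hP : IsMonicOrthogonal L P)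
    (hLM : ∀ p, L p = M ((X - C c) ^ 2 * p)) (n : ℕ) :
    Disjoint (degreeLT K (n + 2)) (orthogonalBelow M (n + 2)) ↔
      M ((X - C c) * P n) * M (P (n + 1)) - M ((X - C c) * P (n + 1)) * M (P n) ≠ 0 := by
  rw [Submodule.disjoint_def]
  constructor
  · intro h hdet
    have hcomb (x y : K) (h₀ : M (C x * P (n + 1) + C y * P n) = 0)
        (h₁ : M ((X - C c) * (C x * P (n + 1) + C y * P n)) = 0) :
        C x * P (n + 1) + C y * P n = 0 :=
      h _ (hP.C_mul_add_C_mul_mem_degreeLT n x y) <|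
        (mem_orthogonalBelow_add_two_iff hLM n).2
          ⟨h₀, h₁, hP.C_mul_add_C_mul_mem_orthogonalBelow n x y⟩
    have hx (x y : K) (hxy : C x * P (n + 1) + C y * P n = 0) : x = 0 := by
      simpa [hP.coeff_self, hP.coeff_eq_zero] using congrArg (coeff · (n + 1)) hxy
    have hM : M (P n) = 0 := hx _ _ <| hcomb (M (P n)) (-M (P (n + 1)))
      (by simp only [map_add, apply_C_mul]; ring)
      (by simp only [mul_add, mul_left_comm _ (C _), map_add, apply_C_mul]
          linear_combination -hdet)
    have hcM : M ((X - C c) * P n) = 0 := hx _ _ <|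
      hcomb (M ((X - C c) * P n)) (-M ((X - C c) * P (n + 1)))
        (by simp only [map_add, apply_C_mul]; linear_combination hdet)
        (by simp only [mul_add, mul_left_comm _ (C _), map_add, apply_C_mul]; ring)
    refine (hP.monic n).ne_zero ?_
    simpa using hcomb 0 1 (by simpa using hM) (by simpa using hcM)
  · intro hdet T hT hTM
    obtain ⟨h₀, h₁, hTL⟩ := (mem_orthogonalBelow_add_two_iff hLM n).1 hTM
    obtain ⟨x, y, rfl⟩ := hP.exists_eq_C_mul_add_C_mul hT hTL
    simp only [mul_add, mul_left_comm _ (C _), map_add, apply_C_mul] at h₀ h₁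
    have hx : x = 0 := mul_right_cancel₀ hdet <| by
      linear_combination M ((X - C c) * P n) * h₀ - M (P n) * h₁
    have hy : y = 0 := mul_right_cancel₀ hdet <| by
      linear_combination M (P (n + 1)) * h₁ - M ((X - C c) * P (n + 1)) * h₀
    simp [hx, hy]

lemma IsMonicOrthogonal.C_mul_eq_det [NoZeroDivisors K] {Q : ℕ → K[X]} (hP : IsMonicOrthogonal L P)
    (hQ : IsMonicOrthogonal M Q) (hLM : ∀ p, L p = M ((X - C c) ^ 2 * p)) (n : ℕ) :
    C (M ((X - C c) * P n) * M (P (n + 1)) - M ((X - C c) * P (n + 1)) * M (P n)) * Q (n + 2) =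
      Matrix.det
        !![P (n + 2), P (n + 1), P n;
           C (M (P (n + 2))), C (M (P (n + 1))), C (M (P n));
           C (M ((X - C c) * P (n + 2))), C (M ((X - C c) * P (n + 1))),
             C (M ((X - C c) * P n))] := by
  -- The cofactors `d`, `x`, `y` of the first row of the determinant.
  set d := M ((X - C c) * P n) * M (P (n + 1)) - M ((X - C c) * P (n + 1)) * M (P n) with hd
  set x := M ((X - C c) * P (n + 2)) * M (P n) - M (P (n + 2)) * M ((X - C c) * P n) with hx
  set y := M (P (n + 2)) * M ((X - C c) * P (n + 1))
    - M ((X - C c) * P (n + 2)) * M (P (n + 1)) with hy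
  set F := C d * P (n + 2) + (C x * P (n + 1) + C y * P n) with hF
  have hdeg : F ∈ degreeLT K (n + 3) :=
    add_mem (C_mul_mem_degreeLT (hP.mem_degreeLT_of_lt (by lia)) d)
      (degreeLT_mono (by lia) (hP.C_mul_add_C_mul_mem_degreeLT n x y))
  have horth : F ∈ orthogonalBelow M (n + 2) := by
    refine (mem_orthogonalBelow_add_two_iff hLM n).2 ⟨?_, ?_, add_mem ?_ ?_⟩
    · simp only [hF, map_add, apply_C_mul, hd, hx, hy]
      ring
    · simp only [hF, mul_add, mul_left_comm _ (C _), map_add, apply_C_mul, hd, hx, hy]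
      ring
    · exact C_mul_mem_orthogonalBelow
        (orthogonalBelow_anti L (by lia) (hP.mem_orthogonalBelow_self (n + 2))) d
    · exact hP.C_mul_add_C_mul_mem_orthogonalBelow n x y
  have hcoeff : F.coeff (n + 2) = d := by
    simp [hF, hP.coeff_self, hP.coeff_eq_zero]
  have hQF : F = C d * Q (n + 2) := hcoeff ▸ hQ.eq_C_coeff_mul hdeg horth
  rw [← hQF, Matrix.det_fin_three]
  simp only [Matrix.of_apply, Matrix.cons_val', Matrix.cons_val_zero, Matrix.cons_val_one,
    Matrix.cons_val, Matrix.cons_val_fin_one, hF, hd, hx, hy, C_sub, C_mul]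
  ring

/-- The three-term recurrence `x Pₙ = Pₙ₊₁ + bₙ Pₙ + aₙ Pₙ₋₁`, `P₋₁ = 0`, `P₀ = 1`, solved for the
polynomial of highest degree: the counterpart of `HasTTRR` over an arbitrary coefficient ring. -/
structure ThreeTermRecurrence (P : ℕ → K[X]) (a b : ℕ → K) : Prop where
  zero : P 0 = 1
  one : P 1 = X - C (b 0)
  add_two (n : ℕ) : P (n + 2) = (X - C (b (n + 1))) * P (n + 1) - C (a (n + 1)) * P n

/-- The polynomials `Sₙ = (û₁ - c û₀) Pₙ + u₀ P⁽¹⁾ₙ₋₁` of the quadratic Geronimus transformation,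
for functionals `L = u` and `M = û`, where `P₁ n` is the associated polynomial `P⁽¹⁾ₙ` of `P`,
and `P⁽¹⁾₋₁ = 0`. -/
def geronimusPoly (L M : K[X] →ₗ[K] K) (c : K) (P P₁ : ℕ → K[X]) : ℕ → K[X]
  | 0 => C (M (X - C c)) * P 0
  | n + 1 => C (M (X - C c)) * P (n + 1) + C (L 1) * P₁ n

/-- The values `S′ₙ(c) + û₀ Pₙ(c)`, entries of the second row of the determinantal formula. -/
def geronimusRow (L M : K[X] →ₗ[K] K) (c : K) (P P₁ : ℕ → K[X]) (n : ℕ) : K :=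
  (derivative (geronimusPoly L M c P P₁ n)).eval c + M 1 * (P n).eval c

/-- The determinants `d*ₙ` deciding whether `û` is quasi-definite, meaningful for `2 ≤ n` because
of the truncated subtractions. -/
def geronimusDet (L M : K[X] →ₗ[K] K) (c : K) (P P₁ : ℕ → K[X]) (n : ℕ) : K :=
  (geronimusPoly L M c P P₁ (n - 2)).eval c * geronimusRow L M c P P₁ (n - 1)
    - (geronimusPoly L M c P P₁ (n - 1)).eval c * geronimusRow L M c P P₁ (n - 2)

lemma geronimusPoly_add_two (hP : ThreeTermRecurrence P a b)
    (hP₁ : ThreeTermRecurrence P₁ (fun n ↦ a (n + 1)) fun n ↦ b (n + 1)) (n : ℕ) :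
    geronimusPoly L M c P P₁ (n + 2) = (X - C (b (n + 1))) * geronimusPoly L M c P P₁ (n + 1)
      - C (a (n + 1)) * geronimusPoly L M c P P₁ n := by
  rcases n with _ | n
  · simp only [geronimusPoly, hP.add_two, hP₁.zero, hP₁.one]
    ring
  · simp only [geronimusPoly, hP.add_two, hP₁.add_two]
    ring

variable (hrec : ThreeTermRecurrence P a b)
  (hrec₁ : ThreeTermRecurrence P₁ (fun n ↦ a (n + 1)) fun n ↦ b (n + 1))
  (hLM : ∀ p, L p = M ((X - C c) ^ 2 * p))
include hrec hrec₁ hLM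

lemma eval_geronimusPoly (hL : ∀ n, L (P (n + 1)) = 0) (n : ℕ) :
    (geronimusPoly L M c P P₁ n).eval c = M ((X - C c) * P n) := by
  induction n using Nat.twoStepInduction with
  | zero => simp [geronimusPoly, hrec.zero]
  | one =>
    have hsplit : (X - C c) * P 1 = (X - C c) ^ 2 * 1 + C (c - b 0) * (X - C c) := by
      rw [hrec.one, C_sub]; ring
    rw [hsplit, map_add, ← hLM, apply_C_mul]
    simp only [geronimusPoly, hrec.one, hrec₁.zero, map_sub, mul_one, eval_add, eval_mul, eval_sub,
      eval_C, eval_X]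
    ring
  | more n ih₀ ih₁ =>
    have hsplit : (X - C c) * P (n + 2) = (X - C c) ^ 2 * P (n + 1)
        + C (c - b (n + 1)) * ((X - C c) * P (n + 1)) - C (a (n + 1)) * ((X - C c) * P n) := by
      rw [hrec.add_two, C_sub]; ring
    rw [hsplit, map_sub, map_add, ← hLM, hL, apply_C_mul, apply_C_mul, ← ih₀, ← ih₁,
      geronimusPoly_add_two hrec hrec₁]
    simp

lemma geronimusRow_eq_apply (hL : ∀ n, L (P (n + 1)) = 0) (n : ℕ) :
    geronimusRow L M c P P₁ n = M (P n) := by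
  induction n using Nat.twoStepInduction with
  | zero => simp [geronimusRow, geronimusPoly, hrec.zero]
  | one =>
    have hsplit : P 1 = (X - C c) + C (c - b 0) * 1 := by
      rw [hrec.one, C_sub]; ring
    rw [congrArg M hsplit, map_add, apply_C_mul]
    simp only [geronimusRow, geronimusPoly, hrec.one, hrec₁.zero, map_sub, mul_one, derivative_add,
      derivative_mul, derivative_C, derivative_X, eval_add, eval_mul, eval_sub, eval_C, eval_X,
      eval_zero, eval_one]
    ring
  | more n ih₀ ih₁ =>
    have hsplit : P (n + 2) = (X - C c) * P (n + 1) + C (c - b (n + 1)) * P (n + 1)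
        - C (a (n + 1)) * P n := by
      rw [hrec.add_two, C_sub]; ring
    rw [congrArg M hsplit, map_sub, map_add, apply_C_mul, apply_C_mul, ← ih₀, ← ih₁,
      ← eval_geronimusPoly hrec hrec₁ hLM hL, geronimusRow, geronimusPoly_add_two hrec hrec₁,
      hrec.add_two, geronimusRow, geronimusRow]
    simp only [derivative_sub, derivative_mul, derivative_X, derivative_C, eval_sub, eval_add,
      eval_mul, eval_X, eval_C, eval_zero, eval_one]
    ring

end QuadraticGeronimus

section General

variable {K : Type*} [Field K] {L M : K[X] →ₗ[K] K} {c : K} {P P₁ : ℕ → K[X]} {a b : ℕ → K}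

theorem stmt_2_general (hP : IsMonicOrthogonal L P) (hrec : ThreeTermRecurrence P a b)
    (hrec₁ : ThreeTermRecurrence P₁ (fun n ↦ a (n + 1)) fun n ↦ b (n + 1))
    (hLM : ∀ p, L p = M ((X - C c) ^ 2 * p)) :
    ((∃ Q, IsMonicOrthogonal M Q) ↔ M 1 ≠ 0 ∧ ∀ n, 2 ≤ n → geronimusDet L M c P P₁ n ≠ 0) ∧
      ∀ Q, IsMonicOrthogonal M Q →
        Q 0 = 1 ∧ Q 1 = X - C (M X / M 1) ∧
        ∀ n, 2 ≤ n →
          C (geronimusDet L M c P P₁ n) * Q n =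
            Matrix.det
              !![P n, P (n - 1), P (n - 2);
                 C (geronimusRow L M c P P₁ n), C (geronimusRow L M c P P₁ (n - 1)),
                   C (geronimusRow L M c P P₁ (n - 2));
                 C ((geronimusPoly L M c P P₁ n).eval c),
                   C ((geronimusPoly L M c P P₁ (n - 1)).eval c),
                   C ((geronimusPoly L M c P P₁ (n - 2)).eval c)] := by
  have heval := eval_geronimusPoly hrec hrec₁ hLM hP.apply_succ_eq_zero
  have hrow := geronimusRow_eq_apply hrec hrec₁ hLM hP.apply_succ_eq_zero
  simp only [geronimusDet, heval, hrow]
  refine ⟨?_, fun Q hQ ↦ ⟨hQ.zero_eq_one, hQ.one_eq_X_sub_C, fun n hn ↦ ?_⟩⟩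
  · rw [exists_isMonicOrthogonal_iff, ← disjoint_degreeLT_one_iff]
    refine ⟨fun h ↦ ⟨h 1, fun n hn ↦ ?_⟩, ?_⟩
    · obtain ⟨k, rfl⟩ := Nat.exists_eq_add_of_le' hn
      exact (hP.disjoint_degreeLT_add_two_iff hLM k).1 (h (k + 2))
    · rintro ⟨h₁, hdet⟩ (_ | _ | n)
      · exact disjoint_degreeLT_zero M
      · exact h₁
      · exact (hP.disjoint_degreeLT_add_two_iff hLM n).2 (hdet (n + 2) (by lia))
  · obtain ⟨k, rfl⟩ := Nat.exists_eq_add_of_le' hn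
    exact hP.C_mul_eq_det hQ hLM k

end General

section MomentSequences

/-- The linear functional with moment sequence `u`: over `ℂ`, the linear map underlying
`fapply u`. -/
def momentFunctional {K : Type*} [CommSemiring K] (u : ℕ → K) : K[X] →ₗ[K] K :=
  lsum fun n ↦ LinearMap.toSpanSingleton K K (u n)

section CommSemiring

variable {K : Type*} [CommSemiring K] (u : ℕ → K)

lemma momentFunctional_X_pow (n : ℕ) : momentFunctional u (X ^ n) = u n := by
  simp [momentFunctional, lsum_apply, X_pow_eq_monomial]

lemma momentFunctional_one : momentFunctional u 1 = u 0 := by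
  simpa using momentFunctional_X_pow u 0

lemma momentFunctional_X : momentFunctional u X = u 1 := by
  simpa using momentFunctional_X_pow u 1

end CommSemiring

section CommRing

variable {K : Type*} [CommRing K] {u v : ℕ → K} {c : K}

lemma momentFunctional_X_sub_C (v : ℕ → K) (c : K) :
    momentFunctional v (X - C c) = v 1 - c * v 0 := by
  rw [map_sub, ← mul_one (C c), apply_C_mul, momentFunctional_X, momentFunctional_one]

lemma momentFunctional_eq_apply_sq_mul
    (h : ∀ n, u n = v (n + 2) - 2 * c * v (n + 1) + c ^ 2 * v n) (p : K[X]) :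
    momentFunctional u p = momentFunctional v ((X - C c) ^ 2 * p) := by
  induction p using Polynomial.induction_on' with
  | add p q hp hq => rw [mul_add, map_add, map_add, hp, hq]
  | monomial n x =>
    have hexpand : (X - C c) ^ 2 * (C x * X ^ n) =
        C x * (X ^ (n + 2) - C (2 * c) * X ^ (n + 1) + C (c ^ 2) * X ^ n) := by
      simp only [C_mul, C_pow, C_ofNat]
      ring
    rw [← C_mul_X_pow_eq_monomial, hexpand]
    simp only [map_add, map_sub, apply_C_mul, momentFunctional_X_pow, h]

end CommRing

variable {u v : ℕ → ℂ} {P : ℕ → ℂ[X]}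

lemma isSMOP_iff : IsSMOP u P ↔ IsMonicOrthogonal (momentFunctional u) P :=
  ⟨fun ⟨hm, hd, ho, hne⟩ ↦ ⟨hm, hd, ho, hne⟩,
    fun h ↦ ⟨h.monic, h.natDegree_eq, h.apply_mul_eq_zero, h.apply_mul_self_ne_zero⟩⟩

lemma HasTTRR.threeTermRecurrence {a b : ℕ → ℂ} (h : HasTTRR P a b) :
    ThreeTermRecurrence P a b where
  zero := h.1
  one := by linear_combination -h.2.1 + (X - C (b 0)) * h.1
  add_two n := by
    have hn : X * P (n + 1) = P (n + 2) + C (b (n + 1)) * P (n + 1) + C (a (n + 1)) * P n :=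
      h.2.2 (n + 1) n.succ_pos
    linear_combination -hn

variable (u v) (c : ℂ) (P P₁ : ℕ → ℂ[X]) (n : ℕ)

lemma Spoly_eq_geronimusPoly :
    Spoly u v c P P₁ n =
      geronimusPoly (momentFunctional u) (momentFunctional v) c P P₁ n := by
  cases n <;> simp [Spoly, geronimusPoly, momentFunctional_X_sub_C, momentFunctional_one]

lemma row2_eq_geronimusRow :
    row2 u v c P P₁ n = geronimusRow (momentFunctional u) (momentFunctional v) c P P₁ n := by
  rw [row2, geronimusRow, Spoly_eq_geronimusPoly, momentFunctional_one]

lemma dstar_eq_geronimusDet :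
    dstar u v c P P₁ n = geronimusDet (momentFunctional u) (momentFunctional v) c P P₁ n := by
  simp only [dstar, geronimusDet, Spoly_eq_geronimusPoly, row2_eq_geronimusRow]

end MomentSequences

/-- quasi-definiteness criterion for a quadratic Geronimus transformation
`u = (x-c)² û`, together with the determinantal formula for the SMOP of `û`. -/
theorem stmt_2 (u : ℕ → ℂ) (c : ℂ) (P : ℕ → Polynomial ℂ) (hP : IsSMOP u P)
    (a b : ℕ → ℂ) (hrec : HasTTRR P a b) (ha : ∀ n, 1 ≤ n → a n ≠ 0)
    (P1 : ℕ → Polynomial ℂ)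
    (hP1 : HasTTRR P1 (fun n => a (n + 1)) (fun n => b (n + 1)))
    (uh : ℕ → ℂ)
    (hrel : ∀ n, u n = uh (n + 2) - 2 * c * uh (n + 1) + c ^ 2 * uh n) :
    (IsQuasiDefinite uh ↔ (uh 0 ≠ 0 ∧ ∀ n, 2 ≤ n → dstar u uh c P P1 n ≠ 0))
    ∧ ((uh 0 ≠ 0 ∧ ∀ n, 2 ≤ n → dstar u uh c P P1 n ≠ 0) →
        ∀ Q : ℕ → Polynomial ℂ, IsSMOP uh Q →
          Q 0 = 1 ∧ Q 1 = X - C (uh 1 / uh 0) ∧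
          ∀ n, 2 ≤ n →
            C (dstar u uh c P P1 n) * Q n =
              Matrix.det
                !![P n, P (n - 1), P (n - 2);
                   C (row2 u uh c P P1 n), C (row2 u uh c P P1 (n - 1)),
                     C (row2 u uh c P P1 (n - 2));
                   C ((Spoly u uh c P P1 n).eval c), C ((Spoly u uh c P P1 (n - 1)).eval c),
                     C ((Spoly u uh c P P1 (n - 2)).eval c)]) := by
  obtain ⟨hiff, hQ⟩ := stmt_2_general (isSMOP_iff.1 hP) hrec.threeTermRecurrence
    hP1.threeTermRecurrence (momentFunctional_eq_apply_sq_mul hrel)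
  simp only [IsQuasiDefinite, isSMOP_iff, dstar_eq_geronimusDet, row2_eq_geronimusRow,
    Spoly_eq_geronimusPoly, ← momentFunctional_one uh, ← momentFunctional_X uh]
  exact ⟨hiff, fun _ ↦ hQ⟩
end
end

section
/- The linear functionals u and u^{-1} cannot be simultaneously positive definite: if u is quasi-definite with recurrence coefficients (a_n, b_n) satisfying b_n ∈ ℝ for all n ≥ 0 and a_n > 0 for all n ≥ 1 (u positive definite), and if u^{-1} is quasi-definite with recurrence coefficients (a^−_n, b^−_n), then a^−_1 = −(b_0² + a_1) < 0, so it is not the case that b^−_n ∈ ℝ for all n and a^−_n > 0 for all n ≥ 1. -/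
open Polynomial

noncomputable section

/-!
Orthogonality of `P 1` and `P 2` to `P 0 = 1` says that `u 1 = b 0 * u 0` and
`u 2 = (b 0 ^ 2 + a 1) * u 0`, so the normalized moment series of `u` begins
`1 + b₀ z + (b₀² + a₁) z² + ⋯`. Its reciprocal, the normalized moment series of `u⁻¹`, begins
`1 - b₀ z - a₁ z² + ⋯`. Reading the recurrence coefficients of `u⁻¹` off this series gives
`b⁻₀ = -b₀` and `(b⁻₀)² + a⁻₁ = -a₁`.
-/

theorem fapply_add (u : ℕ → ℂ) (p q : ℂ[X]) : fapply u (p + q) = fapply u p + fapply u q :=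
  sum_add_index p q _ (by simp) fun _ _ _ => add_mul _ _ _

theorem fapply_C_mul (u : ℕ → ℂ) (c : ℂ) (p : ℂ[X]) : fapply u (C c * p) = c * fapply u p := by
  rw [fapply, fapply, ← smul_eq_C_mul, sum_smul_index p c _ (by simp), sum_def, sum_def,
    Finset.mul_sum]
  exact Finset.sum_congr rfl fun _ _ => mul_assoc _ _ _

theorem fapply_X_pow (u : ℕ → ℂ) (n : ℕ) : fapply u (X ^ n) = u n := by
  rw [fapply, ← monomial_one_right_eq_X_pow]
  exact (sum_monomial_index 1 (fun k c => c * u k) (zero_mul _)).trans (one_mul _)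

section Moments

variable {u : ℕ → ℂ} {P : ℕ → ℂ[X]} {a b : ℕ → ℂ}

theorem IsSMOP.zero_eq_one (hP : IsSMOP u P) : P 0 = 1 :=
  (hP.1 0).natDegree_eq_zero.mp (hP.2.1 0)

theorem IsSMOP.fapply_zero (hP : IsSMOP u P) : fapply u (P 0) = u 0 := by
  rw [hP.zero_eq_one, ← pow_zero X, fapply_X_pow]

theorem IsSMOP.fapply_eq_zero (hP : IsSMOP u P) {n : ℕ} (hn : n ≠ 0) : fapply u (P n) = 0 := by
  simpa only [hP.zero_eq_one, mul_one] using hP.2.2.1 n 0 hn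

theorem HasTTRR.X_eq (h : HasTTRR P a b) : X = P 1 + C (b 0) * P 0 := by
  rw [← h.2.1, h.1, mul_one]

theorem HasTTRR.X_sq_eq (h : HasTTRR P a b) :
    X ^ 2 = P 2 + C (b 0 + b 1) * P 1 + C (b 0 ^ 2 + a 1) * P 0 := by
  have hX_mul_P_one : X * P 1 = P 2 + C (b 1) * P 1 + C (a 1) * P 0 := h.2.2 1 le_rfl
  calc X ^ 2 = X * P 1 + C (b 0) * (X * P 0) := by
        linear_combination X * h.X_eq
    _ = P 2 + C (b 0 + b 1) * P 1 + C (b 0 ^ 2 + a 1) * P 0 := by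
        rw [hX_mul_P_one, h.2.1, C_add, C_add, C_pow]
        ring

theorem IsSMOP.moment_one (hP : IsSMOP u P) (h : HasTTRR P a b) : u 1 = b 0 * u 0 := by
  rw [← fapply_X_pow u 1, pow_one, h.X_eq, fapply_add, fapply_C_mul,
    hP.fapply_eq_zero one_ne_zero, hP.fapply_zero, zero_add]

theorem IsSMOP.moment_two (hP : IsSMOP u P) (h : HasTTRR P a b) :
    u 2 = (b 0 ^ 2 + a 1) * u 0 := by
  rw [← fapply_X_pow u 2, h.X_sq_eq, fapply_add, fapply_add, fapply_C_mul, fapply_C_mul,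
    hP.fapply_eq_zero two_ne_zero, hP.fapply_eq_zero one_ne_zero, hP.fapply_zero,
    mul_zero, zero_add, zero_add]

end Moments

namespace IsInverseMoments

variable {u w : ℕ → ℂ} {β γ β' γ' : ℂ}

theorem mul_zero_eq_one (h : IsInverseMoments u w) : u 0 * w 0 = 1 := by
  simpa using h 0

theorem ratio_one_eq_neg (h : IsInverseMoments u w) (hu : u 1 = β * u 0) (hw : w 1 = β' * w 0) :
    β' = -β := by
  have hconv : u 0 * w 1 + u 1 * w 0 = 0 := by simpa [Finset.sum_range_succ] using h 1
  rw [hu, hw] at hconv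
  linear_combination hconv - (β + β') * h.mul_zero_eq_one

theorem ratio_two_eq_sq_sub (h : IsInverseMoments u w) (hu₁ : u 1 = β * u 0)
    (hu₂ : u 2 = γ * u 0) (hw₁ : w 1 = β' * w 0) (hw₂ : w 2 = γ' * w 0) : γ' = β ^ 2 - γ := by
  have hconv : u 0 * w 2 + u 1 * w 1 + u 2 * w 0 = 0 := by
    simpa [Finset.sum_range_succ] using h 2
  rw [hu₁, hu₂, hw₁, hw₂, h.ratio_one_eq_neg hu₁ hw₁] at hconv
  linear_combination hconv - (γ' - β ^ 2 + γ) * h.mul_zero_eq_one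

end IsInverseMoments

section InverseCoefficients

variable {u : ℕ → ℂ} {P : ℕ → ℂ[X]} {a b : ℕ → ℂ} {uinv : ℕ → ℂ} {Pm : ℕ → ℂ[X]} {am bm : ℕ → ℂ}

theorem IsInverseMoments.b_zero_eq_neg (hinv : IsInverseMoments u uinv) (hP : IsSMOP u P)
    (hrec : HasTTRR P a b) (hPm : IsSMOP uinv Pm) (hrecm : HasTTRR Pm am bm) :
    bm 0 = -b 0 :=
  hinv.ratio_one_eq_neg (hP.moment_one hrec) (hPm.moment_one hrecm)

theorem IsInverseMoments.a_one_eq_neg (hinv : IsInverseMoments u uinv) (hP : IsSMOP u P)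
    (hrec : HasTTRR P a b) (hPm : IsSMOP uinv Pm) (hrecm : HasTTRR Pm am bm) :
    am 1 = -(b 0 ^ 2 + a 1) := by
  have hsecond : bm 0 ^ 2 + am 1 = b 0 ^ 2 - (b 0 ^ 2 + a 1) :=
    hinv.ratio_two_eq_sq_sub (hP.moment_one hrec) (hP.moment_two hrec)
      (hPm.moment_one hrecm) (hPm.moment_two hrecm)
  rw [hinv.b_zero_eq_neg hP hrec hPm hrecm] at hsecond
  linear_combination hsecond

end InverseCoefficients

theorem stmt_8_general (u : ℕ → ℂ) (P : ℕ → ℂ[X]) (hP : IsSMOP u P)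
    (a b : ℕ → ℂ) (hrec : HasTTRR P a b)
    (hbreal : ∃ r : ℝ, b 0 = r) (hapos : ∃ r : ℝ, 0 < r ∧ a 1 = r)
    (uinv : ℕ → ℂ) (hinv : IsInverseMoments u uinv)
    (Pm : ℕ → ℂ[X]) (hPm : IsSMOP uinv Pm)
    (am bm : ℕ → ℂ) (hrecm : HasTTRR Pm am bm) :
    am 1 = -(b 0 ^ 2 + a 1) ∧ ∃ r : ℝ, r < 0 ∧ am 1 = r := by
  have ham : am 1 = -(b 0 ^ 2 + a 1) := hinv.a_one_eq_neg hP hrec hPm hrecm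
  obtain ⟨t, ht⟩ := hbreal
  obtain ⟨s, hs, has⟩ := hapos
  refine ⟨ham, -(t ^ 2 + s), neg_lt_zero.mpr (by positivity), ?_⟩
  rw [ham, ht, has]
  push_cast
  rfl

/-- `u` and `u⁻¹` cannot be simultaneously positive definite: if `u` is
positive definite (real `b_n`, positive `a_n`), then `a⁻_1 = -(b_0² + a_1) < 0`, so the
recurrence coefficients of `u⁻¹` are not all real with positive `a⁻_n`. -/
theorem stmt_8 (u : ℕ → ℂ) (P : ℕ → Polynomial ℂ) (hP : IsSMOP u P)
    (a b : ℕ → ℂ) (hrec : HasTTRR P a b)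
    (hbreal : ∀ n, ∃ r : ℝ, b n = r)
    (hapos : ∀ n, 1 ≤ n → ∃ r : ℝ, 0 < r ∧ a n = r)
    (uinv : ℕ → ℂ) (hinv : IsInverseMoments u uinv)
    (Pm : ℕ → Polynomial ℂ) (hPm : IsSMOP uinv Pm)
    (am bm : ℕ → ℂ) (hrecm : HasTTRR Pm am bm) :
    am 1 = -(b 0 ^ 2 + a 1) ∧
      ¬((∀ n, ∃ r : ℝ, bm n = r) ∧ (∀ n, 1 ≤ n → ∃ r : ℝ, 0 < r ∧ am n = r)) := by
  obtain ⟨ham, s, hs, hams⟩ := stmt_8_general u P hP a b hrec (hbreal 0) (hapos 1 le_rfl)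
    uinv hinv Pm hPm am bm hrecm
  refine ⟨ham, fun ⟨_, hampos⟩ => ?_⟩
  obtain ⟨r, hr, hamr⟩ := hampos 1 le_rfl
  exact hr.not_gt (Complex.ofReal_injective (hams.symm.trans hamr) ▸ hs)
end
end
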